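/- arXiv:2003.10523 — 2 statements merged into one kernel-verified Lean document; each statement's English description precedes it below -/
import Mathlib

section
/- Let d, k ∈ ℕ with d ≥ 4, let X_1,…,X_d be i.i.d. random variables from a non-constant distribution P supported in [-1,1], let C be the (d,k)-multiplicities set, 𝒳 = (X_α)_{α∈C} the column vector of monomials, and Σ = E[𝒳 𝒳ᵀ]. Then the condition number satisfies κ(Σ) = λ_max(Σ)/λ_min(Σ) ≤ C(P,k) · d^{3k}, where C(P,k) = f(P,k)/c(P,k) is a constant independent of d. -/
open MeasureTheory Polynomial Matrix
open scoped Classical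

noncomputable section

/-- One layer of a neural network: apply the weight matrix, then the activation
coordinatewise. -/
def applyLayer (σ : ℝ → ℝ) {m n : ℕ} (W : Matrix (Fin m) (Fin n) ℝ) (v : Fin n → ℝ) :
    Fin m → ℝ :=
  fun j => σ (∑ i, W j i * v i)

/-- Iterated application of `n` square hidden layers. -/
def iterLayers (σ : ℝ → ℝ) {m : ℕ} :
    (n : ℕ) → (Fin n → Matrix (Fin m) (Fin m) ℝ) → (Fin m → ℝ) → (Fin m → ℝ)
  | 0, _, v => v
  | n + 1, W, v => applyLayer σ (W (Fin.last n)) (iterLayers σ n (fun i => W i.castSucc) v)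

/-- Output of a neural network of depth `n+1` (one rectangular layer `W1` followed by
`n` square layers `Ws` and output weights `a`):
`f(W,x) = aᵀ σ(W_{n+1} σ( ⋯ σ(W_1 x) ⋯ ))`. -/
def nnFun (σ : ℝ → ℝ) {d m n : ℕ} (a : Fin m → ℝ)
    (W1 : Matrix (Fin m) (Fin d) ℝ) (Ws : Fin n → Matrix (Fin m) (Fin m) ℝ)
    (x : Fin d → ℝ) : ℝ :=
  ∑ j, a j * iterLayers σ n Ws (applyLayer σ W1 x) j

/-- The monomial `x_α = ∏ i, (x i) ^ (α i)`. -/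
def monom {d : ℕ} (α : Fin d → ℕ) (x : Fin d → ℝ) : ℝ := ∏ i, x i ^ α i

/-- Topological support of a measure on `ℝ`. -/
def measSupport (P : Measure ℝ) : Set ℝ := {x | ∀ U ∈ nhds x, P U ≠ 0}

/-- `ω(P,t) = min(|Support(P)| − 1, t)`, equal to `t` when the support is infinite. -/
def omegaP (P : Measure ℝ) (t : ℕ) : ℕ :=
  if (measSupport P).Finite then min ((measSupport P).ncard - 1) t else t

/-- `M' = min(M, d·(|Support(P)| − 1))`, equal to `M` when the support is infinite. -/
def capM (P : Measure ℝ) (d M : ℕ) : ℕ :=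
  if (measSupport P).Finite then min M (d * ((measSupport P).ncard - 1)) else M

/-- `F_{s,t}`: multi-indices `α ∈ ℕ^d` with all entries `≤ s` and total degree `t`. -/
def Fst (d s t : ℕ) : Finset (Fin d → ℕ) :=
  (Fintype.piFinset fun _ : Fin d => Finset.range (s + 1)).filter fun α => ∑ i, α i = t

/-- The `(d,M)`-multiplicities set `C = ∪_{t=0}^{M'} F_{ω(P,M),t}`. -/
def multSet (P : Measure ℝ) (d M : ℕ) : Finset (Fin d → ℕ) :=
  (Fintype.piFinset fun _ : Fin d => Finset.range (omegaP P M + 1)).filter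
    fun α => ∑ i, α i ≤ capM P d M

/-- `n`-th moment `c_n = E[X^n]` of `P`. -/
def momentP (P : Measure ℝ) (n : ℕ) : ℝ := ∫ x, x ^ n ∂P

/-- Hankel determinant `D_n = det((c_{i+j})_{0 ≤ i,j ≤ n})` of moments of `P`. -/
def Dn (P : Measure ℝ) (n : ℕ) : ℝ :=
  Matrix.det (Matrix.of fun i j : Fin (n + 1) => momentP P ((i : ℕ) + (j : ℕ)))

/-- `c(P,k) = min(min_{1 ≤ i ≤ ω(P,k)} (D_i/D_{i−1})^{k/2}, 1)`. -/
def cPk (P : Measure ℝ) (k : ℕ) : ℝ :=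
  sInf (insert (1 : ℝ)
    ((fun i => (Dn P i / Dn P (i - 1)) ^ ((k : ℝ) / 2)) '' Set.Icc 1 (omegaP P k)))

/-- `max(max_{1 ≤ i ≤ ω(P,k)} (D_i/D_{i−1})^{k/2}, 1)`. -/
def cPkMax (P : Measure ℝ) (k : ℕ) : ℝ :=
  sSup (insert (1 : ℝ)
    ((fun i => (Dn P i / Dn P (i - 1)) ^ ((k : ℝ) / 2)) '' Set.Icc 1 (omegaP P k)))

/-- `max(max_{1 ≤ i ≤ ω(P,k)} (D_i/D_{i−1})^k, 1)`. -/
def ratioMaxK (P : Measure ℝ) (k : ℕ) : ℝ :=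
  sSup (insert (1 : ℝ)
    ((fun i => (Dn P i / Dn P (i - 1)) ^ k) '' Set.Icc 1 (omegaP P k)))

/-- `min(min_{1 ≤ i ≤ ω(P,k)} (D_i/D_{i−1})^k, 1)`. -/
def ratioMinK (P : Measure ℝ) (k : ℕ) : ℝ :=
  sInf (insert (1 : ℝ)
    ((fun i => (Dn P i / Dn P (i - 1)) ^ k) '' Set.Icc 1 (omegaP P k)))

/-- `f(P,k) = max(c_{2ω(P,k)}^k, 1) · max(max_i (D_i/D_{i−1})^k, 1) / min(min_i (D_i/D_{i−1})^k, 1)`. -/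
def fPk (P : Measure ℝ) (k : ℕ) : ℝ :=
  max (momentP P (2 * omegaP P k) ^ k) 1 * ratioMaxK P k / ratioMinK P k

/-- `C(P,k) = f(P,k)/c(P,k)`. -/
def CPk (P : Measure ℝ) (k : ℕ) : ℝ := fPk P k / cPk P k

/-- An admissible distribution: a non-constant probability measure supported in `[-1,1]`. -/
def AdmissibleDist (P : Measure ℝ) : Prop :=
  IsProbabilityMeasure P ∧ P (Set.Icc (-1 : ℝ) 1) = 1 ∧ ∀ c : ℝ, P {c} < 1

/-- The product measure `P^{⊗d}` on `ℝ^d`. -/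
def piP (P : Measure ℝ) (d : ℕ) : Measure (Fin d → ℝ) := Measure.pi fun _ => P

/-- The joint law of `N` i.i.d. samples from `P^{⊗d}`. -/
def samples (P : Measure ℝ) (d N : ℕ) : Measure (Fin N → Fin d → ℝ) :=
  Measure.pi fun _ => piP P d

/-- Order of polynomial approximation of `σ` on `[-1,1]`: the least degree `r` for which
some real polynomial of degree `r` is uniformly within `ε` of `σ` on `[-1,1]`. -/
def approxOrder (σ : ℝ → ℝ) (ε : ℝ) : ℕ :=
  sInf {r : ℕ | ∃ p : Polynomial ℝ, p.natDegree = r ∧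
    ∀ x ∈ Set.Icc (-1 : ℝ) 1, |p.eval x - σ x| ≤ ε}

/-- An admissible activation function. -/
def AdmissibleActivation (σ : ℝ → ℝ) : Prop :=
  (∀ ε : ℝ, 0 < ε → ∃ p : Polynomial ℝ,
      ∀ x ∈ Set.Icc (-1 : ℝ) 1, |p.eval x - σ x| ≤ ε) ∧
  (∀ ε : ℝ, 0 < ε → ∃ p : Polynomial ℝ, p.natDegree = approxOrder σ ε ∧
      (∀ x ∈ Set.Icc (-1 : ℝ) 1, |p.eval x - σ x| ≤ ε) ∧
      ∀ x ∈ Set.Icc (-1 : ℝ) 1, p.eval x ∈ Set.Icc (0 : ℝ) 1) ∧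
  LipschitzOnWith 1 σ (Set.Icc (-1) 1) ∧
  ∀ x ∈ Set.Icc (-1 : ℝ) 1, |σ x| ≤ 1

/-- Quadratic form `vᵀ A v`. -/
def quadForm {n : Type*} [Fintype n] (A : Matrix n n ℝ) (v : n → ℝ) : ℝ :=
  ∑ i, ∑ j, v i * A i j * v j

/-- Smallest eigenvalue of a symmetric matrix (Rayleigh characterization). -/
def lamMin {n : Type*} [Fintype n] (A : Matrix n n ℝ) : ℝ :=
  sInf {r : ℝ | ∃ v : n → ℝ, ∑ i, v i ^ 2 = 1 ∧ r = quadForm A v}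

/-- Largest eigenvalue of a symmetric matrix (Rayleigh characterization). -/
def lamMax {n : Type*} [Fintype n] (A : Matrix n n ℝ) : ℝ :=
  sSup {r : ℝ | ∃ v : n → ℝ, ∑ i, v i ^ 2 = 1 ∧ r = quadForm A v}

/-- Smallest singular value. -/
def sigMin {n : Type*} [Fintype n] (A : Matrix n n ℝ) : ℝ :=
  Real.sqrt (lamMin (Aᵀ * A))

/-- Largest singular value. -/
def sigMax {n : Type*} [Fintype n] (A : Matrix n n ℝ) : ℝ :=
  Real.sqrt (lamMax (Aᵀ * A))

/-- The covariance matrix `Σ = E[𝒳 𝒳ᵀ]` of the monomials indexed by the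
`(d,k)`-multiplicities set, for input `X ∼ P^{⊗d}`. -/
def covMat (P : Measure ℝ) (d k : ℕ) :
    Matrix {α // α ∈ multSet P d k} {α // α ∈ multSet P d k} ℝ :=
  Matrix.of fun a b => ∫ x, monom a.1 x * monom b.1 x ∂(piP P d)

/-!
The monic orthogonal polynomials `pₙ` of `P`, `n ≤ ω(P,k)`, satisfy `E[pₙ²] = Dₙ / Dₙ₋₁`, and since
the multiplicities set `C` is closed under decreasing multi-indices, the products
`∏ᵢ p_{βᵢ}(Xᵢ)`, `β ∈ C`, are linear combinations `M 𝒳` of the monomials. Independence gives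
`M Σ Mᵀ = diag h` with `h_β = ∏ᵢ E[p_{βᵢ}²]`, which is at least the minimum of `1` and the
`(D_i / D_{i-1})^k`, and Cauchy–Schwarz turns this into `λ_min(Σ)⁻¹ ≤ ∑_β ‖M_β‖² / h_β`.

The roots of `pₙ` lie in `[-1,1]`, so its coefficients are bounded by binomial coefficients and
`‖M_β‖² ≤ ∏ᵢ binom(2βᵢ, βᵢ)`. The generating function of the central binomial coefficients is
`(1 - 4X)^{-1/2}`, and the coefficients of its `d`-th power are at most `(2d)^t`, whence
`∑_β ‖M_β‖² ≤ (1 + 2d)^k`. As the entries of `Σ` are at most `1` in absolute value,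
`λ_max(Σ) ≤ |C| ≤ (1 + d)^k`, and `(1 + d)(1 + 2d) ≤ d³` for `d ≥ 4`.
-/

section WeightedCompositions

/-- The recurrence says that `f = ∑ wₙ Xⁿ` solves `(1 - a X) f' = b f`, and then `f ^ d` solves
the same equation with `d b` in place of `b`. -/
lemma coeff_succ_pow_of_recurrence {R : Type*} [CommRing R] {f : PowerSeries R} {a b : R}
    (hf : ∀ n : ℕ, PowerSeries.coeff (n + 1) f * (n + 1) = (a * n + b) * PowerSeries.coeff n f)
    (d n : ℕ) :
    PowerSeries.coeff (n + 1) (f ^ d) * (n + 1) =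
      (a * n + b * d) * PowerSeries.coeff n (f ^ d) := by
  have recurrence_iff (g : PowerSeries R) (c : R) :
      (∀ n : ℕ, PowerSeries.coeff (n + 1) g * (n + 1) = (a * n + c) * PowerSeries.coeff n g) ↔
        PowerSeries.derivative R g =
          a • (PowerSeries.X * PowerSeries.derivative R g) + c • g := by
    rw [PowerSeries.ext_iff]
    refine forall_congr' fun n => ?_
    rw [map_add, PowerSeries.coeff_smul, PowerSeries.coeff_smul, PowerSeries.coeff_derivative]
    rcases n with _ | n
    · simp
    · simp only [PowerSeries.coeff_succ_X_mul, PowerSeries.coeff_derivative, smul_eq_mul]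
      push_cast
      ring_nf
  refine (recurrence_iff (f ^ d) (b * d)).2 ?_ n
  rcases d with _ | d
  · simp
  · have hderiv := (recurrence_iff f b).1 hf
    simp only [PowerSeries.smul_eq_C_mul] at hderiv ⊢
    rw [PowerSeries.derivative_pow, map_mul, map_natCast, Nat.add_sub_cancel]
    linear_combination ((d + 1 : ℕ) : PowerSeries R) * f ^ d * hderiv

lemma sum_piAntidiag_prod_eq_coeff_pow {R ι : Type*} [CommSemiring R] [Fintype ι] [DecidableEq ι]
    (w : ℕ → R) (t : ℕ) :
    ∑ α ∈ Finset.piAntidiag (Finset.univ : Finset ι) t, ∏ i, w (α i) =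
      PowerSeries.coeff t (PowerSeries.mk w ^ Fintype.card ι) := by
  rw [← Finset.card_univ, ← Finset.prod_const, PowerSeries.coeff_prod]
  refine Finset.sum_nbij' Finsupp.equivFunOnFinite.symm Finsupp.equivFunOnFinite ?_ ?_ ?_ ?_ ?_ <;>
    simp

lemma sum_piAntidiag_prod_le_of_recurrence {ι : Type*} [Fintype ι] [DecidableEq ι] {w : ℕ → ℝ}
    {a b : ℝ} (hw₀ : w 0 = 1) (hw : ∀ n, 0 ≤ w n)
    (hrec : ∀ n : ℕ, w (n + 1) * (n + 1) = (a * n + b) * w n)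
    (hb : 0 ≤ b) (hab : a ≤ b * Fintype.card ι) (t : ℕ) :
    ∑ α ∈ Finset.piAntidiag (Finset.univ : Finset ι) t, ∏ i, w (α i) ≤
      (b * Fintype.card ι) ^ t := by
  induction t with
  | zero => simp [hw₀]
  | succ t ih =>
    have hsum (s : ℕ) : 0 ≤ ∑ α ∈ Finset.piAntidiag (Finset.univ : Finset ι) s, ∏ i, w (α i) :=
      Finset.sum_nonneg fun _ _ => Finset.prod_nonneg fun _ _ => hw _
    have hstep := coeff_succ_pow_of_recurrence (f := PowerSeries.mk w) (by simpa using hrec)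
      (Fintype.card ι) t
    rw [← sum_piAntidiag_prod_eq_coeff_pow, ← sum_piAntidiag_prod_eq_coeff_pow] at hstep
    refine le_of_mul_le_mul_right ?_ (by positivity : (0 : ℝ) < t + 1)
    calc (∑ α ∈ Finset.piAntidiag (Finset.univ : Finset ι) (t + 1), ∏ i, w (α i)) * (t + 1)
        = (a * t + b * Fintype.card ι) * ∑ α ∈ Finset.piAntidiag Finset.univ t, ∏ i, w (α i) :=
          hstep
      _ ≤ (b * Fintype.card ι * (t + 1)) * (b * Fintype.card ι) ^ t := by
          gcongr ?_ * ?_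
          · exact hsum t
          · nlinarith [mul_le_mul_of_nonneg_right hab (Nat.cast_nonneg (α := ℝ) t)]
      _ = (b * Fintype.card ι) ^ (t + 1) * (t + 1) := by ring

lemma geom_sum_le_one_add_pow {R : Type*} [CommSemiring R] [PartialOrder R] [IsOrderedRing R]
    {x : R} (hx : 0 ≤ x) (k : ℕ) : ∑ t ∈ Finset.range (k + 1), x ^ t ≤ (1 + x) ^ k := by
  rw [add_comm 1 x, add_pow]
  refine Finset.sum_le_sum fun t ht => ?_
  rw [one_pow, mul_one]
  have hchoose : 1 ≤ k.choose t := Nat.choose_pos (Finset.mem_range_succ_iff.1 ht)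
  exact le_mul_of_one_le_right (pow_nonneg hx t) (by simpa using Nat.mono_cast (α := R) hchoose)

lemma sum_prod_le_of_recurrence {ι : Type*} [Fintype ι] {w : ℕ → ℝ} {a b : ℝ}
    (hw₀ : w 0 = 1) (hw : ∀ n, 0 ≤ w n)
    (hrec : ∀ n : ℕ, w (n + 1) * (n + 1) = (a * n + b) * w n)
    (hb : 0 ≤ b) (hab : a ≤ b * Fintype.card ι) {S : Finset (ι → ℕ)} {k : ℕ}
    (hS : ∀ α ∈ S, ∑ i, α i ≤ k) :
    ∑ α ∈ S, ∏ i, w (α i) ≤ (1 + b * Fintype.card ι) ^ k := by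
  have hmaps : ∀ α ∈ S, ∑ i, α i ∈ Finset.range (k + 1) := fun α hα =>
    Finset.mem_range_succ_iff.2 (hS α hα)
  calc ∑ α ∈ S, ∏ i, w (α i)
      = ∑ t ∈ Finset.range (k + 1), ∑ α ∈ S with ∑ i, α i = t, ∏ i, w (α i) :=
        (Finset.sum_fiberwise_of_maps_to hmaps _).symm
    _ ≤ ∑ t ∈ Finset.range (k + 1), (b * Fintype.card ι) ^ t := by
        refine Finset.sum_le_sum fun t _ => le_trans ?_
          (sum_piAntidiag_prod_le_of_recurrence hw₀ hw hrec hb hab t)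
        refine Finset.sum_le_sum_of_subset_of_nonneg (fun α hα => ?_)
          fun _ _ _ => Finset.prod_nonneg fun _ _ => hw _
        simpa using (Finset.mem_filter.1 hα).2
    _ ≤ (1 + b * Fintype.card ι) ^ k := geom_sum_le_one_add_pow (by positivity) k

lemma sum_prod_centralBinom_le {ι : Type*} [Fintype ι] (hι : 2 ≤ Fintype.card ι)
    {S : Finset (ι → ℕ)} {k : ℕ} (hS : ∀ α ∈ S, ∑ i, α i ≤ k) :
    ∑ α ∈ S, ∏ i, ((α i).centralBinom : ℝ) ≤ (1 + 2 * Fintype.card ι) ^ k := by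
  have hrec (n : ℕ) : ((n + 1).centralBinom : ℝ) * (n + 1) = (4 * n + 2) * n.centralBinom := by
    have := Nat.succ_mul_centralBinom_succ n
    rify at this
    linarith
  have hab : (4 : ℝ) ≤ 2 * Fintype.card ι := by
    rify at hι
    linarith
  exact sum_prod_le_of_recurrence (by simp) (fun _ => Nat.cast_nonneg _) hrec zero_le_two hab hS

lemma card_le_one_add_card_pow {ι : Type*} [Fintype ι] [Nonempty ι]
    {S : Finset (ι → ℕ)} {k : ℕ} (hS : ∀ α ∈ S, ∑ i, α i ≤ k) :
    (S.card : ℝ) ≤ (1 + Fintype.card ι) ^ k := by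
  have hι : (1 : ℝ) ≤ 1 * Fintype.card ι := by
    simpa using Nat.one_le_iff_ne_zero.2 (Fintype.card_ne_zero (α := ι))
  simpa using sum_prod_le_of_recurrence (w := fun _ => 1) (a := 1) (b := 1) rfl
    (fun _ => zero_le_one) (fun n => by ring) zero_le_one hι hS

end WeightedCompositions

section LowerSets

lemma sum_prod_eq_prod_sum_range {ι R : Type*} [Fintype ι] [CommSemiring R]
    {S : Finset (ι → ℕ)} (hS : IsLowerSet (S : Set (ι → ℕ))) {β : ι → ℕ} (hβ : β ∈ S)
    {f : ι → ℕ → R} (hf : ∀ i a, β i < a → f i a = 0) :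
    ∑ α ∈ S, ∏ i, f i (α i) = ∏ i, ∑ a ∈ Finset.range (β i + 1), f i a := by
  rw [Finset.prod_univ_sum]
  symm
  refine Finset.sum_subset (fun α hα => hS (fun i => ?_) hβ) fun α _ hα => ?_
  · simpa [Nat.lt_succ_iff] using Fintype.mem_piFinset.1 hα i
  · obtain ⟨i, hi⟩ : ∃ i, β i < α i := by simpa [Nat.lt_succ_iff] using hα
    exact Finset.prod_eq_zero (Finset.mem_univ i) (hf i _ hi)

lemma prod_eval_eq_sum_coeff_mul_monom {d : ℕ} {S : Finset (Fin d → ℕ)}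
    (hS : IsLowerSet (S : Set (Fin d → ℕ))) {β : Fin d → ℕ} (hβ : β ∈ S) {q : Fin d → ℝ[X]}
    (hq : ∀ i, (q i).natDegree ≤ β i) (x : Fin d → ℝ) :
    ∏ i, (q i).eval (x i) = ∑ α ∈ S, (∏ i, (q i).coeff (α i)) * monom α x := by
  simp only [monom, ← Finset.prod_mul_distrib]
  rw [sum_prod_eq_prod_sum_range hS hβ (f := fun i a => (q i).coeff a * x i ^ a) fun i a ha => by
    rw [coeff_eq_zero_of_natDegree_lt ((hq i).trans_lt ha), zero_mul]]
  exact Finset.prod_congr rfl fun i _ => eval_eq_sum_range' (Nat.lt_succ_of_le (hq i)) (x i)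

end LowerSets

section Rayleigh

variable {n : Type*} [Fintype n]

lemma quadForm_eq_dotProduct (A : Matrix n n ℝ) (v : n → ℝ) : quadForm A v = v ⬝ᵥ A *ᵥ v := by
  simp only [quadForm, dotProduct, mulVec, Finset.mul_sum, mul_assoc]

lemma exists_sum_sq_eq_one [Nonempty n] : ∃ v : n → ℝ, ∑ i, v i ^ 2 = 1 := by
  obtain ⟨i⟩ := ‹Nonempty n›
  refine ⟨Pi.single i 1, ?_⟩
  simp [Pi.single_apply, ite_pow]

lemma lamMax_le [Nonempty n] {A : Matrix n n ℝ} {c : ℝ}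
    (hA : ∀ v, quadForm A v ≤ c * ∑ i, v i ^ 2) : lamMax A ≤ c := by
  obtain ⟨v₀, hv₀⟩ := exists_sum_sq_eq_one (n := n)
  refine csSup_le ⟨_, v₀, hv₀, rfl⟩ ?_
  rintro _ ⟨v, hv, rfl⟩
  simpa [hv] using hA v

lemma le_lamMin [Nonempty n] {A : Matrix n n ℝ} {c : ℝ}
    (hA : ∀ v, c * ∑ i, v i ^ 2 ≤ quadForm A v) : c ≤ lamMin A := by
  obtain ⟨v₀, hv₀⟩ := exists_sum_sq_eq_one (n := n)
  refine le_csInf ⟨_, v₀, hv₀, rfl⟩ ?_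
  rintro _ ⟨v, hv, rfl⟩
  simpa [hv] using hA v

lemma quadForm_le_of_abs_le {A : Matrix n n ℝ} {c : ℝ} (hA : ∀ i j, |A i j| ≤ c) (v : n → ℝ) :
    quadForm A v ≤ c * Fintype.card n * ∑ i, v i ^ 2 := by
  rcases isEmpty_or_nonempty n with _ | ⟨⟨i₀⟩⟩
  · simp [quadForm]
  have hc : 0 ≤ c := (abs_nonneg _).trans (hA i₀ i₀)
  calc quadForm A v ≤ ∑ i, ∑ j, |v i| * c * |v j| := by
        refine Finset.sum_le_sum fun i _ => Finset.sum_le_sum fun j _ => (le_abs_self _).trans ?_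
        rw [abs_mul, abs_mul]
        gcongr
        exact hA i j
    _ = c * (∑ i, |v i|) ^ 2 := by
        rw [sq, Finset.sum_mul_sum, Finset.mul_sum]
        refine Finset.sum_congr rfl fun i _ => ?_
        rw [Finset.mul_sum]
        exact Finset.sum_congr rfl fun j _ => by ring
    _ ≤ c * (Fintype.card n * ∑ i, |v i| ^ 2) := by
        gcongr
        exact sq_sum_le_card_mul_sum_sq
    _ = c * Fintype.card n * ∑ i, v i ^ 2 := by simp only [sq_abs, mul_assoc]

lemma quadForm_transpose_mulVec [DecidableEq n] {A M : Matrix n n ℝ} {h : n → ℝ}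
    (hM : M * A * Mᵀ = diagonal h) (u : n → ℝ) :
    quadForm A (Mᵀ *ᵥ u) = ∑ i, h i * u i ^ 2 := by
  calc quadForm A (Mᵀ *ᵥ u) = u ⬝ᵥ (M * A * Mᵀ) *ᵥ u := by
        rw [quadForm_eq_dotProduct, mulVec_transpose, ← dotProduct_mulVec, ← mulVec_transpose]
        simp only [mulVec_mulVec, Matrix.mul_assoc]
    _ = ∑ i, h i * u i ^ 2 := by
        rw [hM]
        simp only [dotProduct, mulVec_diagonal]
        exact Finset.sum_congr rfl fun i _ => by ring

lemma isUnit_of_mul_mul_transpose_eq_diagonal {K : Type*} [Field K] [DecidableEq n]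
    {A M : Matrix n n K} {h : n → K} (hh : ∀ i, h i ≠ 0) (hM : M * A * Mᵀ = diagonal h) :
    IsUnit M := by
  have hdet : M.det * A.det * Mᵀ.det ≠ 0 := by
    rw [← det_mul, ← det_mul, hM, det_diagonal]
    exact Finset.prod_ne_zero_iff.2 fun i _ => hh i
  rw [isUnit_iff_isUnit_det]
  exact (left_ne_zero_of_mul (left_ne_zero_of_mul hdet)).isUnit

/-- Write `v = Mᵀ u`; then `quadForm A v = ∑ hᵢ uᵢ²` and Cauchy–Schwarz bounds each entry of `v`. -/
lemma inv_le_lamMin_of_sum_div_le [Nonempty n] [DecidableEq n] {A M : Matrix n n ℝ} {h : n → ℝ}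
    {c : ℝ} (hh : ∀ i, 0 < h i) (hM : M * A * Mᵀ = diagonal h)
    (hc : ∑ i, (∑ j, M i j ^ 2) / h i ≤ c) : c⁻¹ ≤ lamMin A := by
  refine le_lamMin fun v => ?_
  have hunit : IsUnit Mᵀ :=
    (isUnit_transpose M).2 <| isUnit_of_mul_mul_transpose_eq_diagonal (fun i => (hh i).ne') hM
  obtain ⟨u, rfl⟩ := mulVec_surjective_iff_isUnit.2 hunit v
  rw [quadForm_transpose_mulVec hM]
  have hentry (j : n) : (Mᵀ *ᵥ u) j ^ 2 ≤ (∑ i, h i * u i ^ 2) * ∑ i, M i j ^ 2 / h i := by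
    refine Finset.sum_sq_le_sum_mul_sum_of_sq_le_mul _
      (fun i _ => mul_nonneg (hh i).le (sq_nonneg _))
      (fun i _ => div_nonneg (sq_nonneg _) (hh i).le) fun i _ => le_of_eq ?_
    have := (hh i).ne'
    change (M i j * u i) ^ 2 = _
    field_simp
  have hquad : 0 ≤ ∑ i, h i * u i ^ 2 :=
    Finset.sum_nonneg fun i _ => mul_nonneg (hh i).le (sq_nonneg _)
  have htrace : 0 ≤ ∑ i, (∑ j, M i j ^ 2) / h i :=
    Finset.sum_nonneg fun i _ => div_nonneg (Finset.sum_nonneg fun _ _ => sq_nonneg _) (hh i).le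
  refine inv_mul_le_of_le_mul₀ (htrace.trans hc) hquad ?_
  calc ∑ j, (Mᵀ *ᵥ u) j ^ 2 ≤ ∑ j, (∑ i, h i * u i ^ 2) * ∑ i, M i j ^ 2 / h i :=
        Finset.sum_le_sum fun j _ => hentry j
    _ = (∑ i, (∑ j, M i j ^ 2) / h i) * ∑ i, h i * u i ^ 2 := by
        rw [← Finset.mul_sum, Finset.sum_comm, mul_comm]
        simp only [Finset.sum_div]
    _ ≤ c * ∑ i, h i * u i ^ 2 := by gcongr

lemma mul_gram_mul_transpose {m Ω : Type*} [MeasurableSpace Ω] {μ : Measure Ω} {X : n → Ω → ℝ}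
    (hX : ∀ a b, Integrable (fun ω => X a ω * X b ω) μ) (M : Matrix m n ℝ) (i j : m) :
    (M * (Matrix.of fun a b => ∫ ω, X a ω * X b ω ∂μ) * Mᵀ) i j =
      ∫ ω, (∑ a, M i a * X a ω) * ∑ b, M j b * X b ω ∂μ := by
  have hexpand (ω : Ω) : (∑ a, M i a * X a ω) * ∑ b, M j b * X b ω =
      ∑ b, ∑ a, M i a * M j b * (X a ω * X b ω) := by
    rw [Finset.sum_mul_sum, Finset.sum_comm]
    exact Finset.sum_congr rfl fun b _ => Finset.sum_congr rfl fun a _ => by ring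
  simp only [hexpand]
  rw [integral_finsetSum _ fun b _ => integrable_finsetSum _ fun a _ => (hX a b).const_mul _]
  simp only [mul_apply, transpose_apply, of_apply, Finset.sum_mul]
  refine Finset.sum_congr rfl fun b _ => ?_
  rw [integral_finsetSum _ fun a _ => (hX a b).const_mul _]
  exact Finset.sum_congr rfl fun a _ => by rw [integral_const_mul]; ring

end Rayleigh

section OrthogonalPolynomials

/-- `q` is the monic orthogonal polynomial of degree `n` for the linear functional `L`, which
plays the role of the expectation `q ↦ E[q(X)]`. -/
structure IsMonicOrthogonal {R : Type*} [CommRing R] (L : R[X] →ₗ[R] R) (n : ℕ) (q : R[X]) :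
    Prop where
  monic : q.Monic
  natDegree_eq : q.natDegree = n
  map_mul_eq_zero : ∀ r : R[X], r.degree < n → L (q * r) = 0

/-- The Hankel matrix `(L(X^{i+j}))_{0 ≤ i,j ≤ n}` of the moments of a linear functional. -/
def hankelMatrix {R : Type*} [CommRing R] (L : R[X] →ₗ[R] R) (n : ℕ) :
    Matrix (Fin (n + 1)) (Fin (n + 1)) R :=
  Matrix.of fun i j => L (X ^ ((i : ℕ) + j))

lemma exists_isMonicOrthogonal {K : Type*} [Field K] {L : K[X] →ₗ[K] K} {n : ℕ}
    (hL : ∀ r : K[X], r ≠ 0 → r.degree < n → L (r * r) ≠ 0) :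
    ∃ q, IsMonicOrthogonal L n q := by
  let B : K[X] →ₗ[K] Module.Dual K K[X] := (LinearMap.mul K K[X]).compr₂ L
  let T : degreeLT K n →ₗ[K] Module.Dual K (degreeLT K n) :=
    B.domRestrict₁₂ (degreeLT K n) (degreeLT K n)
  have : FiniteDimensional K (degreeLT K n) := Module.Finite.equiv (degreeLTEquiv K n).symm
  have hinj : Function.Injective T := by
    refine (injective_iff_map_eq_zero T).2 fun r hr => ?_
    by_contra hr₀
    exact hL r.1 (by simpa using hr₀) (mem_degreeLT.1 r.2) (LinearMap.congr_fun hr r)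
  have hsurj : Function.Surjective T :=
    (LinearMap.injective_iff_surjective_of_finrank_eq_finrank Subspace.dual_finrank_eq.symm).1 hinj
  obtain ⟨p, hp⟩ := hsurj ((B (X ^ n)).comp (degreeLT K n).subtype)
  have hdeg : p.1.degree < n := mem_degreeLT.1 p.2
  refine ⟨X ^ n - p.1, monic_X_pow_sub hdeg, ?_, fun r hr => ?_⟩
  · refine natDegree_eq_of_degree_eq_some ?_
    rw [degree_sub_eq_left_of_degree_lt] <;> simp [hdeg]
  · have hproj : L (p.1 * r) = L (X ^ n * r) := LinearMap.congr_fun hp ⟨r, mem_degreeLT.2 hr⟩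
    rw [sub_mul, map_sub, hproj, sub_self]

lemma map_mul_eq_sum_hankelMatrix {R : Type*} [CommRing R] (L : R[X] →ₗ[R] R) {n : ℕ} {p q : R[X]}
    (hp : p.natDegree ≤ n) (hq : q.natDegree ≤ n) :
    L (p * q) = ∑ j : Fin (n + 1), ∑ i : Fin (n + 1),
      p.coeff i * hankelMatrix L n i j * q.coeff j := by
  have hterm (i j : ℕ) : C (p.coeff i) * X ^ i * (C (q.coeff j) * X ^ j) =
      (p.coeff i * q.coeff j) • (X ^ (i + j) : R[X]) := by
    rw [smul_eq_C_mul, C_mul, pow_add]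
    ring
  conv_lhs => rw [p.as_sum_range_C_mul_X_pow' (Nat.lt_succ_of_le hp),
    q.as_sum_range_C_mul_X_pow' (Nat.lt_succ_of_le hq)]
  rw [Finset.sum_mul_sum, Finset.sum_comm]
  simp only [hterm, map_sum, map_smul, smul_eq_mul, Finset.sum_range, hankelMatrix, of_apply]
  exact Finset.sum_congr rfl fun j _ => Finset.sum_congr rfl fun i _ => by ring

namespace IsMonicOrthogonal

section CommRing

variable {R : Type*} [CommRing R] {L : R[X] →ₗ[R] R} {m n : ℕ} {p q : R[X]}

lemma degree_eq [Nontrivial R] (hq : IsMonicOrthogonal L n q) : q.degree = n := by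
  rw [degree_eq_natDegree hq.monic.ne_zero, hq.natDegree_eq]

lemma eq_one (hq : IsMonicOrthogonal L 0 q) : q = 1 :=
  hq.monic.natDegree_eq_zero.1 hq.natDegree_eq

lemma map_mul_eq_zero_of_ne [Nontrivial R] (hp : IsMonicOrthogonal L m p)
    (hq : IsMonicOrthogonal L n q) (hmn : m ≠ n) : L (p * q) = 0 := by
  rcases hmn.lt_or_gt with h | h
  · rw [mul_comm]
    exact hq.map_mul_eq_zero p (by rw [hp.degree_eq]; exact_mod_cast h)
  · exact hp.map_mul_eq_zero q (by rw [hq.degree_eq]; exact_mod_cast h)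

/-- The coefficient matrix of `p 0, …, p n` is unitriangular and diagonalizes the Hankel matrix. -/
lemma det_hankelMatrix [Nontrivial R] {p : ℕ → R[X]}
    (hp : ∀ i ≤ n, IsMonicOrthogonal L i (p i)) :
    (hankelMatrix L n).det = ∏ i ∈ Finset.range (n + 1), L (p i * p i) := by
  let M : Matrix (Fin (n + 1)) (Fin (n + 1)) R := Matrix.of fun i j => (p i).coeff j
  have hp' (i : Fin (n + 1)) : IsMonicOrthogonal L i (p i) := hp i (Nat.le_of_lt_succ i.2)
  have hdiag : M * hankelMatrix L n * Mᵀ = diagonal fun i : Fin (n + 1) => L (p i * p i) := by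
    ext i j
    have hentry : (M * hankelMatrix L n * Mᵀ) i j = L (p i * p j) := by
      rw [map_mul_eq_sum_hankelMatrix L
        ((hp' i).natDegree_eq.trans_le (Nat.le_of_lt_succ i.2))
        ((hp' j).natDegree_eq.trans_le (Nat.le_of_lt_succ j.2))]
      simp only [mul_apply, transpose_apply, Finset.sum_mul, M, of_apply]
    rw [hentry, diagonal_apply]
    split_ifs with hij
    · rw [hij]
    · exact (hp' i).map_mul_eq_zero_of_ne (hp' j) (Fin.val_ne_of_ne hij)
  have hdet : M.det = 1 := by
    rw [det_of_isLowerTriangular]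
    · refine Finset.prod_eq_one fun i _ => ?_
      simpa [M, (hp' i).natDegree_eq] using (hp' i).monic.coeff_natDegree
    · intro i j (hij : i < j)
      exact coeff_eq_zero_of_natDegree_lt ((hp' i).natDegree_eq.trans_lt hij)
  have := congrArg Matrix.det hdiag
  rw [det_mul, det_mul, det_transpose, hdet, det_diagonal, one_mul, mul_one] at this
  rw [this, Finset.prod_range]

end CommRing

section Real

variable {L : ℝ[X] →ₗ[ℝ] ℝ} {n : ℕ} {q : ℝ[X]} {B : ℝ} {z : ℂ}

lemma abs_le_of_isRoot (hq : IsMonicOrthogonal L n q)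
    (hpos : ∀ r : ℝ[X], r ≠ 0 → r.degree < n → 0 < L (r * r))
    (hB : ∀ r : ℝ[X], |L (X * (r * r))| ≤ B * L (r * r)) {x : ℝ} (hx : q.IsRoot x) :
    |x| ≤ B := by
  obtain ⟨r, hr⟩ := dvd_iff_isRoot.2 hx
  have hr₀ : r ≠ 0 := right_ne_zero_of_mul (hr ▸ hq.monic.ne_zero)
  have hdeg : r.degree < n := by
    rw [← hq.degree_eq, hr, degree_mul, degree_X_sub_C, degree_eq_natDegree hr₀]
    norm_cast
    lia
  have hmean : L (X * (r * r)) = x * L (r * r) := by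
    have hqr : q * r = X * (r * r) - x • (r * r) := by
      rw [hr, smul_eq_C_mul]
      ring
    have := hq.map_mul_eq_zero r hdeg
    rwa [hqr, map_sub, map_smul, smul_eq_mul, sub_eq_zero] at this
  have hr_pos := hpos r hr₀ hdeg
  have := hB r
  rw [hmean, abs_mul, abs_of_pos hr_pos] at this
  exact le_of_mul_le_mul_right this hr_pos

/-- A non-real root would give a factor `(X - re z)² + (im z)²` of `q`, positive on `ℝ`, so that `q`
could not be orthogonal to the cofactor. -/
lemma im_eq_zero_of_aeval_eq_zero (hq : IsMonicOrthogonal L n q)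
    (hnonneg : ∀ r : ℝ[X], 0 ≤ L (r * r))
    (hpos : ∀ r : ℝ[X], r ≠ 0 → r.degree < n → 0 < L (r * r)) (hz : aeval z q = 0) :
    z.im = 0 := by
  by_contra him
  obtain ⟨r, hr⟩ := q.quadratic_dvd_of_aeval_eq_zero_im_ne_zero hz him
  set s : ℝ[X] := X ^ 2 - C (2 * z.re) * X + C (‖z‖ ^ 2)
  have hr₀ : r ≠ 0 := right_ne_zero_of_mul (hr ▸ hq.monic.ne_zero)
  have hdeg : r.degree < n := by
    have hs : s.degree = 2 := by
      simp only [s]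
      compute_degree!
    rw [← hq.degree_eq, hr, degree_mul, hs, degree_eq_natDegree hr₀]
    norm_cast
    lia
  have hqr : q * r = ((X - C z.re) * r) * ((X - C z.re) * r) + (z.im ^ 2) • (r * r) := by
    rw [hr, smul_eq_C_mul]
    simp only [s, Complex.sq_norm, Complex.normSq_apply, map_mul, map_add, map_pow, map_ofNat]
    ring
  have hzero := hq.map_mul_eq_zero r hdeg
  rw [hqr, map_add, map_smul, smul_eq_mul] at hzero
  have him_pos : 0 < z.im ^ 2 * L (r * r) := mul_pos (by positivity) (hpos r hr₀ hdeg)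
  linarith [hnonneg ((X - C z.re) * r)]

lemma norm_le_of_aeval_eq_zero (hq : IsMonicOrthogonal L n q)
    (hnonneg : ∀ r : ℝ[X], 0 ≤ L (r * r))
    (hpos : ∀ r : ℝ[X], r ≠ 0 → r.degree < n → 0 < L (r * r))
    (hB : ∀ r : ℝ[X], |L (X * (r * r))| ≤ B * L (r * r)) (hz : aeval z q = 0) : ‖z‖ ≤ B := by
  obtain ⟨x, rfl⟩ : ∃ x : ℝ, (x : ℂ) = z :=
    ⟨z.re, Complex.ext rfl (hq.im_eq_zero_of_aeval_eq_zero hnonneg hpos hz).symm⟩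
  have hroot : q.IsRoot x := by
    have hx : aeval (algebraMap ℝ ℂ x) q = 0 := hz
    rw [aeval_algebraMap_apply, coe_aeval_eq_eval] at hx
    exact Complex.ofReal_eq_zero.1 hx
  simpa using hq.abs_le_of_isRoot hpos hB hroot

lemma abs_coeff_le (hq : IsMonicOrthogonal L n q)
    (hnonneg : ∀ r : ℝ[X], 0 ≤ L (r * r))
    (hpos : ∀ r : ℝ[X], r ≠ 0 → r.degree < n → 0 < L (r * r))
    (hB : ∀ r : ℝ[X], |L (X * (r * r))| ≤ B * L (r * r)) (a : ℕ) :
    |q.coeff a| ≤ B ^ (n - a) * n.choose a := by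
  have := coeff_le_of_roots_le (f := algebraMap ℝ ℂ) a hq.monic (IsAlgClosed.splits _) fun z hz =>
    hq.norm_le_of_aeval_eq_zero hnonneg hpos hB (z := z)
      (by simpa [IsRoot.def, eval_map_algebraMap] using (mem_roots'.1 hz).2)
  simpa [coeff_map, hq.natDegree_eq] using this

lemma sum_coeff_sq_le_centralBinom (hq : IsMonicOrthogonal L n q)
    (hnonneg : ∀ r : ℝ[X], 0 ≤ L (r * r))
    (hpos : ∀ r : ℝ[X], r ≠ 0 → r.degree < n → 0 < L (r * r))
    (hB : ∀ r : ℝ[X], |L (X * (r * r))| ≤ 1 * L (r * r)) :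
    ∑ a ∈ Finset.range (n + 1), q.coeff a ^ 2 ≤ n.centralBinom := by
  calc ∑ a ∈ Finset.range (n + 1), q.coeff a ^ 2
      ≤ ∑ a ∈ Finset.range (n + 1), (n.choose a : ℝ) ^ 2 := by
        refine Finset.sum_le_sum fun a _ => sq_le_sq.2 ?_
        simpa using hq.abs_coeff_le hnonneg hpos hB a
    _ = n.centralBinom := by
        rw [Nat.centralBinom]
        exact_mod_cast Nat.sum_range_choose_sq n

end Real

end IsMonicOrthogonal

end OrthogonalPolynomials

section Moments

variable {P : Measure ℝ}

lemma integrable_pow_of_abs_le [IsFiniteMeasure P] {B : ℝ} (hP : ∀ᵐ x ∂P, |x| ≤ B) (n : ℕ) :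
    Integrable (fun x => x ^ n) P := by
  refine Integrable.of_bound (by fun_prop) (B ^ n) ?_
  filter_upwards [hP] with x hx
  rw [norm_pow]
  exact pow_le_pow_left₀ (norm_nonneg x) hx n

lemma integrable_eval (hP : ∀ n : ℕ, Integrable (fun x => x ^ n) P) (q : ℝ[X]) :
    Integrable (fun x => q.eval x) P := by
  simp only [eval_eq_sum_range]
  exact integrable_finsetSum _ fun n _ => (hP n).const_mul _

/-- The expectation functional `q ↦ E[q(X)]`, `X ∼ P`. It is defined through the moments, so as to
be linear without integrability assumptions. -/
def momentFunctional (P : Measure ℝ) : ℝ[X] →ₗ[ℝ] ℝ :=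
  (basisMonomials ℝ).constr ℝ (momentP P)

lemma momentFunctional_X_pow (P : Measure ℝ) (n : ℕ) :
    momentFunctional P (X ^ n) = momentP P n := by
  rw [X_pow_eq_monomial]
  exact (basisMonomials ℝ).constr_basis ℝ (momentP P) n

lemma Dn_eq_det_hankelMatrix (P : Measure ℝ) (n : ℕ) :
    Dn P n = (hankelMatrix (momentFunctional P) n).det := by
  simp only [Dn, hankelMatrix, momentFunctional_X_pow]

lemma momentFunctional_eq_integral (hP : ∀ n : ℕ, Integrable (fun x => x ^ n) P) (q : ℝ[X]) :
    momentFunctional P q = ∫ x, q.eval x ∂P := by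
  conv_lhs => rw [q.as_sum_range_C_mul_X_pow]
  simp only [eval_eq_sum_range, ← smul_eq_C_mul, map_sum, map_smul, momentFunctional_X_pow,
    momentP, smul_eq_mul]
  rw [integral_finsetSum _ fun n _ => (hP n).const_mul _]
  simp only [integral_const_mul]

lemma momentFunctional_mul_self_nonneg (hP : ∀ n : ℕ, Integrable (fun x => x ^ n) P) (r : ℝ[X]) :
    0 ≤ momentFunctional P (r * r) := by
  rw [momentFunctional_eq_integral hP]
  exact integral_nonneg fun x => by simpa using mul_self_nonneg (r.eval x)

lemma abs_momentFunctional_X_mul_le [IsFiniteMeasure P] {B : ℝ} (hP : ∀ᵐ x ∂P, |x| ≤ B)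
    (r : ℝ[X]) :
    |momentFunctional P (X * (r * r))| ≤ B * momentFunctional P (r * r) := by
  have hint := integrable_pow_of_abs_le hP
  rw [momentFunctional_eq_integral hint, momentFunctional_eq_integral hint, ← Real.norm_eq_abs,
    ← integral_const_mul]
  refine norm_integral_le_of_norm_le ((integrable_eval hint _).const_mul B) ?_
  filter_upwards [hP] with x hx
  simp only [eval_mul, eval_X, Real.norm_eq_abs, abs_mul, abs_mul_abs_self]
  exact mul_le_mul_of_nonneg_right hx (mul_self_nonneg _)

lemma abs_momentP_le_one [IsProbabilityMeasure P] (hP : ∀ᵐ x ∂P, |x| ≤ 1) (n : ℕ) :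
    |momentP P n| ≤ 1 := by
  have := norm_integral_le_of_norm_le_const (f := fun x : ℝ => x ^ n) (C := 1) (μ := P) <| by
    filter_upwards [hP] with x hx
    rw [norm_pow]
    exact pow_le_one₀ (norm_nonneg x) hx
  simpa [momentP] using this

lemma measSupport_eq_support (P : Measure ℝ) : measSupport P = P.support := by
  ext x
  simp [measSupport, Measure.mem_support_iff_forall, pos_iff_ne_zero]

lemma measSupport_subset_roots {q : ℝ[X]} (hq : q ≠ 0) (hqP : ∀ᵐ x ∂P, q.eval x = 0) :
    measSupport P ⊆ (q.roots.toFinset : Set ℝ) := by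
  rw [measSupport_eq_support]
  refine Measure.support_subset_of_isClosed (Finset.finite_toSet _).isClosed ?_
  filter_upwards [hqP] with x hx
  simp [hq, hx]

lemma omegaP_lt_natDegree_of_ae_eval_eq_zero [NeZero P] {k : ℕ} {q : ℝ[X]} (hq : q ≠ 0)
    (hqP : ∀ᵐ x ∂P, q.eval x = 0) : omegaP P k < q.natDegree := by
  have hsub := measSupport_subset_roots hq hqP
  have hfin : (measSupport P).Finite := (Finset.finite_toSet _).subset hsub
  have hpos : 0 < (measSupport P).ncard := by
    rw [Set.ncard_pos hfin, measSupport_eq_support]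
    exact Measure.nonempty_support (NeZero.ne P)
  have hcard : (measSupport P).ncard ≤ q.natDegree :=
    calc (measSupport P).ncard ≤ (q.roots.toFinset : Set ℝ).ncard := Set.ncard_le_ncard hsub
      _ = q.roots.toFinset.card := Set.ncard_coe_finset _
      _ ≤ q.natDegree := (Multiset.toFinset_card_le _).trans q.card_roots'
  rw [omegaP, if_pos hfin]
  lia

lemma momentFunctional_mul_self_pos [NeZero P] (hP : ∀ n : ℕ, Integrable (fun x => x ^ n) P)
    {k : ℕ} {r : ℝ[X]} (hr : r ≠ 0) (hdeg : r.natDegree ≤ omegaP P k) :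
    0 < momentFunctional P (r * r) := by
  refine (momentFunctional_mul_self_nonneg hP r).lt_of_ne fun hzero => hdeg.not_gt ?_
  rw [momentFunctional_eq_integral hP] at hzero
  refine omegaP_lt_natDegree_of_ae_eval_eq_zero hr ?_
  have hae := (integral_eq_zero_iff_of_nonneg
    (fun x => by simpa using mul_self_nonneg (r.eval x)) (integrable_eval hP (r * r))).1 hzero.symm
  filter_upwards [hae] with x hx
  simpa using hx

lemma exists_isMonicOrthogonal_momentFunctional [NeZero P]
    (hP : ∀ n : ℕ, Integrable (fun x => x ^ n) P) (k : ℕ) :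
    ∃ p : ℕ → ℝ[X], ∀ n ≤ omegaP P k, IsMonicOrthogonal (momentFunctional P) n (p n) := by
  refine ⟨fun n => if h : ∃ q, IsMonicOrthogonal (momentFunctional P) n q then h.choose else 0,
    fun n hn => ?_⟩
  have hex : ∃ q, IsMonicOrthogonal (momentFunctional P) n q :=
    exists_isMonicOrthogonal fun r hr hdeg => (momentFunctional_mul_self_pos hP hr
      ((natDegree_le_of_degree_le hdeg.le).trans hn)).ne'
  simp only [dif_pos hex]
  exact hex.choose_spec

lemma momentFunctional_one [IsProbabilityMeasure P] : momentFunctional P 1 = 1 := by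
  rw [← pow_zero X, momentFunctional_X_pow]
  simp [momentP]

variable {k i n : ℕ} {p : ℕ → ℝ[X]}

lemma IsMonicOrthogonal.momentFunctional_mul_self_pos [NeZero P]
    (hP : ∀ n : ℕ, Integrable (fun x => x ^ n) P) {q : ℝ[X]}
    (hq : IsMonicOrthogonal (momentFunctional P) n q) (hn : n ≤ omegaP P k) :
    0 < momentFunctional P (q * q) :=
  _root_.momentFunctional_mul_self_pos hP hq.monic.ne_zero (hq.natDegree_eq.trans_le hn)

lemma Dn_div_Dn_pred [NeZero P] (hP : ∀ n : ℕ, Integrable (fun x => x ^ n) P)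
    (hp : ∀ n ≤ omegaP P k, IsMonicOrthogonal (momentFunctional P) n (p n))
    (hi : i ∈ Set.Icc 1 (omegaP P k)) :
    Dn P i / Dn P (i - 1) = momentFunctional P (p i * p i) := by
  obtain ⟨hi₁, hik⟩ := hi
  obtain ⟨j, rfl⟩ := Nat.exists_eq_add_of_le' hi₁
  have hdet {n : ℕ} (hn : n ≤ omegaP P k) :=
    IsMonicOrthogonal.det_hankelMatrix fun m (hm : m ≤ n) => hp m (hm.trans hn)
  have hjk : j ≤ omegaP P k := j.le_succ.trans hik
  rw [Nat.add_sub_cancel, Dn_eq_det_hankelMatrix, Dn_eq_det_hankelMatrix, hdet hik, hdet hjk,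
    Finset.prod_range_succ _ (j + 1)]
  refine mul_div_cancel_left₀ _ (Finset.prod_ne_zero_iff.2 fun m hm => ?_)
  have hm' : m ≤ omegaP P k := (Finset.mem_range_succ_iff.1 hm).trans hjk
  exact ((hp m hm').momentFunctional_mul_self_pos hP hm').ne'

lemma Dn_div_Dn_pred_pos [NeZero P] (hP : ∀ n : ℕ, Integrable (fun x => x ^ n) P)
    (hi : i ∈ Set.Icc 1 (omegaP P k)) : 0 < Dn P i / Dn P (i - 1) := by
  obtain ⟨p, hp⟩ := exists_isMonicOrthogonal_momentFunctional hP k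
  rw [Dn_div_Dn_pred hP hp hi]
  exact (hp i hi.2).momentFunctional_mul_self_pos hP hi.2

end Moments

section RatioConstants

lemma sInf_insert_one_image_pos {ι : Type*} {s : Set ι} (hs : s.Finite) {g : ι → ℝ}
    (hg : ∀ i ∈ s, 0 < g i) : 0 < sInf (insert 1 (g '' s)) := by
  rw [((hs.image g).insert 1).lt_csInf_iff (Set.insert_nonempty _ _)]
  simpa using hg

lemma ratioMinK_le_one (P : Measure ℝ) (k : ℕ) : ratioMinK P k ≤ 1 :=
  csInf_le (((Set.finite_Icc _ _).image _).insert 1).bddBelow (Set.mem_insert _ _)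

lemma ratioMinK_le_pow (P : Measure ℝ) {k i : ℕ} (hi : i ∈ Set.Icc 1 (omegaP P k)) :
    ratioMinK P k ≤ (Dn P i / Dn P (i - 1)) ^ k :=
  csInf_le (((Set.finite_Icc _ _).image _).insert 1).bddBelow
    (Set.mem_insert_of_mem _ (Set.mem_image_of_mem _ hi))

lemma ratioMinK_pos {P : Measure ℝ} {k : ℕ}
    (hD : ∀ i ∈ Set.Icc 1 (omegaP P k), 0 < Dn P i / Dn P (i - 1)) : 0 < ratioMinK P k :=
  sInf_insert_one_image_pos (Set.finite_Icc _ _) fun i hi => pow_pos (hD i hi) k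

lemma cPk_pos {P : Measure ℝ} {k : ℕ}
    (hD : ∀ i ∈ Set.Icc 1 (omegaP P k), 0 < Dn P i / Dn P (i - 1)) : 0 < cPk P k :=
  sInf_insert_one_image_pos (Set.finite_Icc _ _) fun i hi => Real.rpow_pos_of_pos (hD i hi) _

lemma cPk_le_one (P : Measure ℝ) (k : ℕ) : cPk P k ≤ 1 :=
  csInf_le (((Set.finite_Icc _ _).image _).insert 1).bddBelow (Set.mem_insert _ _)

lemma one_le_ratioMaxK (P : Measure ℝ) (k : ℕ) : 1 ≤ ratioMaxK P k :=
  le_csSup (((Set.finite_Icc _ _).image _).insert 1).bddAbove (Set.mem_insert _ _)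

lemma inv_ratioMinK_le_CPk {P : Measure ℝ} {k : ℕ}
    (hD : ∀ i ∈ Set.Icc 1 (omegaP P k), 0 < Dn P i / Dn P (i - 1)) :
    (ratioMinK P k)⁻¹ ≤ CPk P k := by
  have hmin := ratioMinK_pos hD
  have hnum : 1 ≤ max (momentP P (2 * omegaP P k) ^ k) 1 * ratioMaxK P k :=
    one_le_mul_of_one_le_of_one_le (le_max_right _ _) (one_le_ratioMaxK P k)
  have hf : (ratioMinK P k)⁻¹ ≤ fPk P k := by
    rw [fPk, inv_eq_one_div]
    gcongr
  exact hf.trans (le_div_self ((inv_pos.2 hmin).le.trans hf) (cPk_pos hD) (cPk_le_one P k))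

lemma le_prod_of_le_pow {ι : Type*} [Fintype ι] {r : ℝ} {k : ℕ} {b : ι → ℕ} {x : ι → ℝ}
    (hr : 0 ≤ r) (hr₁ : r ≤ 1) (hb : ∑ i, b i ≤ k) (hx : ∀ i, 0 ≤ x i)
    (hx₁ : ∀ i, b i = 0 → x i = 1) (hrx : ∀ i, b i ≠ 0 → r ≤ x i ^ k) : r ≤ ∏ i, x i := by
  rcases eq_or_ne k 0 with rfl | hk
  · have hb₀ : ∀ i, b i = 0 := by simpa using hb
    rwa [Finset.prod_eq_one fun i _ => hx₁ i (hb₀ i)]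
  have hfactor (i : ι) : r ^ b i ≤ x i ^ k := by
    rcases eq_or_ne (b i) 0 with hi | hi
    · simp [hi, hx₁ i hi]
    · exact (pow_le_of_le_one hr hr₁ hi).trans (hrx i hi)
  refine le_of_pow_le_pow_left₀ hk (Finset.prod_nonneg fun i _ => hx i) ?_
  calc r ^ k ≤ r ^ ∑ i, b i := pow_le_pow_of_le_one hr hr₁ hb
    _ = ∏ i, r ^ b i := (Finset.prod_pow_eq_pow_sum _ _ _).symm
    _ ≤ ∏ i, x i ^ k := Finset.prod_le_prod (fun i _ => pow_nonneg hr _) fun i _ => hfactor i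
    _ = (∏ i, x i) ^ k := Finset.prod_pow _ _ _

end RatioConstants

section MultiplicitiesSet

variable {P : Measure ℝ} {d k : ℕ} {α : Fin d → ℕ}

lemma mem_multSet : α ∈ multSet P d k ↔ (∀ i, α i ≤ omegaP P k) ∧ ∑ i, α i ≤ capM P d k := by
  simp [multSet]

lemma isLowerSet_multSet : IsLowerSet (multSet P d k : Set (Fin d → ℕ)) := by
  intro α β hβα hα
  rw [Finset.mem_coe, mem_multSet] at hα ⊢
  exact ⟨fun i => (hβα i).trans (hα.1 i), (Finset.sum_le_sum fun i _ => hβα i).trans hα.2⟩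

lemma sum_le_of_mem_multSet (hα : α ∈ multSet P d k) : ∑ i, α i ≤ k := by
  refine (mem_multSet.1 hα).2.trans ?_
  rw [capM]
  split_ifs
  exacts [min_le_left _ _, le_rfl]

lemma zero_mem_multSet : 0 ∈ multSet P d k :=
  mem_multSet.2 (by simp)

end MultiplicitiesSet

section MonomialCovariance

variable {P : Measure ℝ} {d : ℕ} {S : Finset (Fin d → ℕ)}

/-- The covariance matrix of the monomials indexed by an arbitrary finite set of multi-indices. -/
def monomCovMatrix (P : Measure ℝ) (S : Finset (Fin d → ℕ)) : Matrix S S ℝ :=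
  Matrix.of fun a b => ∫ x, monom a.1 x * monom b.1 x ∂(piP P d)

/-- The coefficients of the products `∏ i, (p (β i)) (x i)`, `β ∈ S`, in the monomials indexed by
`S`; for orthogonal `p n` this is the change of basis to the tensor orthogonal polynomials. -/
def tensorCoeffMatrix (S : Finset (Fin d → ℕ)) (p : ℕ → ℝ[X]) : Matrix S S ℝ :=
  Matrix.of fun β α => ∏ i, (p (β.1 i)).coeff (α.1 i)

lemma monomCovMatrix_apply [SigmaFinite P] (a b : S) :
    monomCovMatrix P S a b = ∏ i, momentP P (a.1 i + b.1 i) := by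
  simp only [monomCovMatrix, of_apply, piP, monom, momentP, ← Finset.prod_mul_distrib, ← pow_add]
  exact integral_fintype_prod_eq_prod fun i (x : ℝ) => x ^ (a.1 i + b.1 i)

lemma abs_monomCovMatrix_le_one [IsProbabilityMeasure P] (hP : ∀ᵐ x ∂P, |x| ≤ 1) (a b : S) :
    |monomCovMatrix P S a b| ≤ 1 := by
  rw [monomCovMatrix_apply, Finset.abs_prod]
  exact Finset.prod_le_one (fun _ _ => abs_nonneg _) fun _ _ => abs_momentP_le_one hP _

lemma integrable_monom_mul_monom [SigmaFinite P]
    (hP : ∀ n : ℕ, Integrable (fun x => x ^ n) P) (α β : Fin d → ℕ) :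
    Integrable (fun x => monom α x * monom β x) (piP P d) := by
  simp only [monom, ← Finset.prod_mul_distrib, ← pow_add]
  exact Integrable.fintype_prod fun i => hP (α i + β i)

lemma integral_prod_eval_mul_prod_eval [SigmaFinite P]
    (hP : ∀ n : ℕ, Integrable (fun x => x ^ n) P) (q r : Fin d → ℝ[X]) :
    ∫ x, (∏ i, (q i).eval (x i)) * ∏ i, (r i).eval (x i) ∂(piP P d) =
      ∏ i, momentFunctional P (q i * r i) := by
  simp only [← Finset.prod_mul_distrib, ← eval_mul, momentFunctional_eq_integral hP]
  exact integral_fintype_prod_eq_prod fun i (x : ℝ) => (q i * r i).eval x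

lemma tensorCoeffMatrix_mul_monomCovMatrix_mul_transpose [SigmaFinite P]
    (hP : ∀ n : ℕ, Integrable (fun x => x ^ n) P) (hS : IsLowerSet (S : Set (Fin d → ℕ)))
    {p : ℕ → ℝ[X]} (hp : ∀ β ∈ S, ∀ i, IsMonicOrthogonal (momentFunctional P) (β i) (p (β i))) :
    tensorCoeffMatrix S p * monomCovMatrix P S * (tensorCoeffMatrix S p)ᵀ =
      diagonal fun β : S => ∏ i, momentFunctional P (p (β.1 i) * p (β.1 i)) := by
  have hrow (β : S) (x : Fin d → ℝ) :
      ∑ α, tensorCoeffMatrix S p β α * monom α.1 x = ∏ i, (p (β.1 i)).eval (x i) := by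
    rw [prod_eval_eq_sum_coeff_mul_monom hS β.2 fun i => (hp β β.2 i).natDegree_eq.le]
    exact Finset.sum_coe_sort S fun α => (∏ i, (p (β.1 i)).coeff (α i)) * monom α x
  ext β γ
  rw [monomCovMatrix, mul_gram_mul_transpose fun a b => integrable_monom_mul_monom hP a.1 b.1]
  simp only [hrow]
  rw [integral_prod_eval_mul_prod_eval hP, diagonal_apply]
  split_ifs with hβγ
  · rw [hβγ]
  · obtain ⟨i, hi⟩ := Function.ne_iff.1 (Subtype.coe_ne_coe.2 hβγ)
    exact Finset.prod_eq_zero (Finset.mem_univ i)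
      ((hp β β.2 i).map_mul_eq_zero_of_ne (hp γ γ.2 i) hi)

lemma sum_tensorCoeffMatrix_sq (hS : IsLowerSet (S : Set (Fin d → ℕ))) {p : ℕ → ℝ[X]} (β : S)
    (hp : ∀ i, (p (β.1 i)).natDegree ≤ β.1 i) :
    ∑ α, tensorCoeffMatrix S p β α ^ 2 =
      ∏ i, ∑ a ∈ Finset.range (β.1 i + 1), (p (β.1 i)).coeff a ^ 2 := by
  rw [← sum_prod_eq_prod_sum_range hS β.2 fun i a ha => by
    rw [coeff_eq_zero_of_natDegree_lt ((hp i).trans_lt ha), zero_pow two_ne_zero]]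
  simp only [tensorCoeffMatrix, of_apply, ← Finset.prod_pow]
  exact Finset.sum_coe_sort S fun α => ∏ i, (p (β.1 i)).coeff (α i) ^ 2

end MonomialCovariance

section ConditionNumber

variable {P : Measure ℝ} [IsProbabilityMeasure P] {d k : ℕ}

lemma ratioMinK_le_prod {p : ℕ → ℝ[X]} (hP : ∀ n : ℕ, Integrable (fun x => x ^ n) P)
    (hp : ∀ n ≤ omegaP P k, IsMonicOrthogonal (momentFunctional P) n (p n)) {β : Fin d → ℕ}
    (hβ : β ∈ multSet P d k) :
    ratioMinK P k ≤ ∏ i, momentFunctional P (p (β i) * p (β i)) := by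
  have hβω := (mem_multSet.1 hβ).1
  refine le_prod_of_le_pow (ratioMinK_pos fun i hi => Dn_div_Dn_pred_pos hP hi).le
    (ratioMinK_le_one P k) (sum_le_of_mem_multSet hβ)
    (fun i => momentFunctional_mul_self_nonneg hP _) (fun i hi => ?_) fun i hi => ?_
  · rw [hi, (hp 0 (Nat.zero_le _)).eq_one, one_mul, momentFunctional_one]
  · have hmem : β i ∈ Set.Icc 1 (omegaP P k) := ⟨Nat.one_le_iff_ne_zero.2 hi, hβω i⟩
    rw [← Dn_div_Dn_pred hP hp hmem]
    exact ratioMinK_le_pow P hmem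

lemma sum_tensorCoeffMatrix_sq_le {p : ℕ → ℝ[X]} (hP : ∀ᵐ x ∂P, |x| ≤ 1)
    (hp : ∀ n ≤ omegaP P k, IsMonicOrthogonal (momentFunctional P) n (p n))
    (β : multSet P d k) :
    ∑ α, tensorCoeffMatrix (multSet P d k) p β α ^ 2 ≤ ∏ i, ((β.1 i).centralBinom : ℝ) := by
  have hint := integrable_pow_of_abs_le hP
  have hβω := (mem_multSet.1 β.2).1
  rw [sum_tensorCoeffMatrix_sq isLowerSet_multSet β fun i => (hp _ (hβω i)).natDegree_eq.le]
  refine Finset.prod_le_prod (fun i _ => Finset.sum_nonneg fun a _ => sq_nonneg _) fun i _ => ?_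
  exact (hp _ (hβω i)).sum_coeff_sq_le_centralBinom (momentFunctional_mul_self_nonneg hint)
    (fun r hr hdeg => momentFunctional_mul_self_pos hint hr
      ((natDegree_le_of_degree_le hdeg.le).trans (hβω i)))
    (abs_momentFunctional_X_mul_le hP)

lemma ratioMinK_div_le_lamMin_covMat (hP : ∀ᵐ x ∂P, |x| ≤ 1) (hd : 2 ≤ d) :
    ratioMinK P k / (1 + 2 * d) ^ k ≤ lamMin (covMat P d k) := by
  have hint := integrable_pow_of_abs_le hP
  have hmin : 0 < ratioMinK P k := ratioMinK_pos fun i hi => Dn_div_Dn_pred_pos hint hi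
  obtain ⟨p, hp⟩ := exists_isMonicOrthogonal_momentFunctional hint k
  let S := multSet P d k
  let M := tensorCoeffMatrix S p
  let h (β : S) : ℝ := ∏ i, momentFunctional P (p (β.1 i) * p (β.1 i))
  have hh (β : S) : ratioMinK P k ≤ h β := ratioMinK_le_prod hint hp β.2
  have hdiag : M * covMat P d k * Mᵀ = diagonal h :=
    tensorCoeffMatrix_mul_monomCovMatrix_mul_transpose hint isLowerSet_multSet
      fun β hβ i => hp (β i) ((mem_multSet.1 hβ).1 i)
  have : Nonempty S := ⟨0, zero_mem_multSet⟩
  have htrace : ∑ β, (∑ α, M β α ^ 2) / h β ≤ (1 + 2 * d) ^ k / ratioMinK P k :=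
    calc ∑ β, (∑ α, M β α ^ 2) / h β
        ≤ ∑ β : S, (∏ i, ((β.1 i).centralBinom : ℝ)) / ratioMinK P k := by
          gcongr with β
          · exact sum_tensorCoeffMatrix_sq_le hP hp β
          · exact hh β
      _ = (∑ β ∈ S, ∏ i, ((β i).centralBinom : ℝ)) / ratioMinK P k := by
          rw [← Finset.sum_div, Finset.sum_coe_sort S fun β => ∏ i, ((β i).centralBinom : ℝ)]
      _ ≤ (1 + 2 * d) ^ k / ratioMinK P k := by
          gcongr
          simpa using sum_prod_centralBinom_le (k := k) (by simpa using hd)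
            fun α hα => sum_le_of_mem_multSet hα
  rw [← inv_div]
  exact inv_le_lamMin_of_sum_div_le (fun β => hmin.trans_le (hh β)) hdiag htrace

lemma lamMax_covMat_le (hP : ∀ᵐ x ∂P, |x| ≤ 1) (hd : 1 ≤ d) :
    lamMax (covMat P d k) ≤ (1 + d) ^ k := by
  have : Nonempty (multSet P d k) := ⟨0, zero_mem_multSet⟩
  have : Nonempty (Fin d) := ⟨⟨0, hd⟩⟩
  calc lamMax (covMat P d k) ≤ 1 * Fintype.card (multSet P d k) :=
        lamMax_le (quadForm_le_of_abs_le (abs_monomCovMatrix_le_one hP))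
    _ ≤ (1 + d) ^ k := by
        rw [one_mul, Fintype.card_coe]
        simpa using card_le_one_add_card_pow fun α (hα : α ∈ multSet P d k) =>
          sum_le_of_mem_multSet hα

end ConditionNumber

lemma one_add_pow_mul_one_add_two_mul_pow_le {x : ℝ} (hx : 4 ≤ x) (k : ℕ) :
    (1 + x) ^ k * (1 + 2 * x) ^ k ≤ x ^ (3 * k) := by
  have hx₀ : 0 ≤ x := by linarith
  have hcube : (1 + x) * (1 + 2 * x) ≤ x ^ 3 := by
    nlinarith [mul_nonneg (sub_nonneg.2 hx) (sq_nonneg x), mul_nonneg (sub_nonneg.2 hx) hx₀]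
  rw [← mul_pow, pow_mul]
  gcongr

lemma AdmissibleDist.ae_abs_le_one {P : Measure ℝ} (hP : AdmissibleDist P) :
    ∀ᵐ x ∂P, |x| ≤ 1 := by
  have := hP.1
  filter_upwards [(mem_ae_iff_prob_eq_one measurableSet_Icc).2 hP.2.1] with x hx
  exact abs_le.2 hx

/-- Condition number bound: for `d ≥ 4`,
`κ(Σ) = λ_max(Σ)/λ_min(Σ) ≤ C(P,k) d^{3k}`, stated as `λ_max(Σ) ≤ C(P,k) d^{3k} λ_min(Σ)`. -/
theorem covariance_condition_number_bound
    (P : Measure ℝ) (hP : AdmissibleDist P) (d k : ℕ) (hd : 4 ≤ d) :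
    lamMax (covMat P d k) ≤ CPk P k * (d : ℝ) ^ (3 * k) * lamMin (covMat P d k) := by
  have := hP.1
  have hbound := hP.ae_abs_le_one
  have hratio : ∀ i ∈ Set.Icc 1 (omegaP P k), 0 < Dn P i / Dn P (i - 1) :=
    fun _ => Dn_div_Dn_pred_pos (integrable_pow_of_abs_le hbound)
  have hmin : 0 < ratioMinK P k := ratioMinK_pos hratio
  have hC : (ratioMinK P k)⁻¹ ≤ CPk P k := inv_ratioMinK_le_CPk hratio
  have hC₀ : 0 ≤ CPk P k := (inv_pos.2 hmin).le.trans hC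
  have hdim : (1 + d : ℝ) ^ k * (1 + 2 * d) ^ k ≤ d ^ (3 * k) :=
    one_add_pow_mul_one_add_two_mul_pow_le (by exact_mod_cast hd) k
  calc lamMax (covMat P d k) ≤ (1 + d) ^ k := lamMax_covMat_le hbound (by lia)
    _ ≤ (d : ℝ) ^ (3 * k) / (1 + 2 * d) ^ k := (le_div_iff₀ (by positivity)).2 hdim
    _ = (ratioMinK P k)⁻¹ * d ^ (3 * k) * (ratioMinK P k / (1 + 2 * d) ^ k) := by field_simp
    _ ≤ CPk P k * d ^ (3 * k) * lamMin (covMat P d k) := by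
        gcongr
        exact ratioMinK_div_le_lamMin_covMat hbound (by lia)

end
end

section
/- Consider an L-layer neural network of width m* with admissible activation σ (with order of approximation φ_σ) and weights W*, computing f(W*, x), whose weights satisfy ‖a*‖_{ℓ1} ≤ 1 and ‖W*_{k,j}‖_{ℓ1} ≤ 1 for every layer k and row j. Then for every ε > 0 there exists a real polynomial P of degree φ_σ(ε/L) such that the network f̂(W*, x) = (a*)ᵀ P(W*_L P(W*_{L−1} ⋯ P(W*_1 x))⋯), obtained by replacing σ with P everywhere, satisfies sup_{x ∈ [-1,1]^d} |f(W*, x) − f̂(W*, x)| ≤ ε. -/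
open MeasureTheory Polynomial Matrix
open scoped Classical

noncomputable section

/-!
The `ℓ1` bounds on the rows make every linear layer a contraction of the sup norm that preserves
the cube `[-1,1]^m`, and both `σ` and `P` map `[-1,1]` to itself, so both networks stay where `σ`
is `1`-Lipschitz and `P` is close to `σ`. Each layer therefore passes on the error it
receives and adds at most `ε / L` of its own, and the output weights do not amplify the total.
-/

section LayerEstimates

open Metric Set
open scoped NNReal

lemma norm_dotProduct_le_sum_norm_mul_norm {ι A : Type*} [Fintype ι] [NonUnitalSeminormedRing A]
    (w v : ι → A) : ‖w ⬝ᵥ v‖ ≤ (∑ i, ‖w i‖) * ‖v‖ := by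
  calc ‖w ⬝ᵥ v‖ ≤ ∑ i, ‖w i‖ * ‖v i‖ := norm_sum_le_of_le _ fun i _ => norm_mul_le _ _
    _ ≤ ∑ i, ‖w i‖ * ‖v‖ := by gcongr with i; exact norm_le_pi_norm v i
    _ = (∑ i, ‖w i‖) * ‖v‖ := (Finset.sum_mul ..).symm

lemma abs_dotProduct_le_norm {ι : Type*} [Fintype ι] {w : ι → ℝ} (hw : ∑ i, |w i| ≤ 1)
    (v : ι → ℝ) : |w ⬝ᵥ v| ≤ ‖v‖ :=
  (norm_dotProduct_le_sum_norm_mul_norm w v).trans (mul_le_of_le_one_left (norm_nonneg v) hw)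

lemma dist_le_mul_dist_add_of_lipschitzOnWith {α β : Type*} [PseudoMetricSpace α]
    [PseudoMetricSpace β] {f g : α → β} {K : ℝ≥0} {s : Set α} {x y : α} {δ : ℝ}
    (hf : LipschitzOnWith K f s) (hx : x ∈ s) (hy : y ∈ s) (hfg : dist (f y) (g y) ≤ δ) :
    dist (f x) (g y) ≤ K * dist x y + δ :=
  (dist_triangle _ (f y) _).trans (add_le_add (hf.dist_le_mul x hx y hy) hfg)

variable {σ q : ℝ → ℝ} {K : ℝ≥0} {R δ : ℝ} {d m n : ℕ}

lemma dotProduct_mem_closedBall {w v : Fin n → ℝ} (hw : ∑ i, |w i| ≤ 1)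
    (hv : v ∈ closedBall 0 R) : w ⬝ᵥ v ∈ closedBall 0 R :=
  mem_closedBall_zero_iff.2 <|
    (abs_dotProduct_le_norm hw v).trans (mem_closedBall_zero_iff.1 hv)

lemma mapsTo_applyLayer (hσ : MapsTo σ (closedBall 0 R) (closedBall 0 R))
    {W : Matrix (Fin m) (Fin n) ℝ} (hW : ∀ j, ∑ i, |W j i| ≤ 1) :
    MapsTo (applyLayer σ W) (closedBall 0 R) (closedBall 0 R) := fun v hv =>
  (dist_pi_le_iff (nonempty_closedBall.1 ⟨v, hv⟩)).2 fun j =>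
    hσ (dotProduct_mem_closedBall (hW j) hv)

lemma lipschitzOnWith_applyLayer (hσ : LipschitzOnWith K σ (closedBall 0 R))
    {W : Matrix (Fin m) (Fin n) ℝ} (hW : ∀ j, ∑ i, |W j i| ≤ 1) :
    LipschitzOnWith K (applyLayer σ W) (closedBall 0 R) := by
  refine LipschitzOnWith.of_dist_le_mul fun u hu v hv =>
    (dist_pi_le_iff (by positivity)).2 fun j => ?_
  calc dist (σ (W j ⬝ᵥ u)) (σ (W j ⬝ᵥ v)) ≤ K * dist (W j ⬝ᵥ u) (W j ⬝ᵥ v) :=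
        hσ.dist_le_mul _ (dotProduct_mem_closedBall (hW j) hu) _
          (dotProduct_mem_closedBall (hW j) hv)
    _ = K * |W j ⬝ᵥ (u - v)| := by rw [Real.dist_eq, dotProduct_sub]
    _ ≤ K * dist u v := by
        rw [dist_eq_norm]
        gcongr
        exact abs_dotProduct_le_norm (hW j) _

lemma dist_applyLayer_le (hq : ∀ x ∈ closedBall 0 R, dist (σ x) (q x) ≤ δ)
    {W : Matrix (Fin m) (Fin n) ℝ} (hW : ∀ j, ∑ i, |W j i| ≤ 1) {v : Fin n → ℝ}
    (hv : v ∈ closedBall 0 R) : dist (applyLayer σ W v) (applyLayer q W v) ≤ δ := by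
  have hR : 0 ≤ R := nonempty_closedBall.1 ⟨v, hv⟩
  have hδ : 0 ≤ δ := dist_nonneg.trans (hq 0 (mem_closedBall_self hR))
  exact (dist_pi_le_iff hδ).2 fun j => hq _ (dotProduct_mem_closedBall (hW j) hv)

lemma mapsTo_iterLayers (hσ : MapsTo σ (closedBall 0 R) (closedBall 0 R))
    {Ws : Fin n → Matrix (Fin m) (Fin m) ℝ} (hWs : ∀ p j, ∑ i, |Ws p j i| ≤ 1) :
    MapsTo (iterLayers σ n Ws) (closedBall 0 R) (closedBall 0 R) := by
  induction n with
  | zero => exact mapsTo_id _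
  | succ n ih => exact (mapsTo_applyLayer hσ (hWs _)).comp (ih fun p => hWs p.castSucc)

lemma dist_iterLayers_le (hσ : LipschitzOnWith K σ (closedBall 0 R))
    (hσR : MapsTo σ (closedBall 0 R) (closedBall 0 R))
    (hqR : MapsTo q (closedBall 0 R) (closedBall 0 R))
    (hq : ∀ x ∈ closedBall 0 R, dist (σ x) (q x) ≤ δ)
    {Ws : Fin n → Matrix (Fin m) (Fin m) ℝ} (hWs : ∀ p j, ∑ i, |Ws p j i| ≤ 1)
    {u v : Fin m → ℝ} (hu : u ∈ closedBall 0 R) (hv : v ∈ closedBall 0 R) :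
    dist (iterLayers σ n Ws u) (iterLayers q n Ws v) ≤
      K ^ n * dist u v + (∑ i ∈ Finset.range n, (K : ℝ) ^ i) * δ := by
  induction n with
  | zero => simp [iterLayers]
  | succ n ih =>
    let Vs : Fin n → Matrix (Fin m) (Fin m) ℝ := fun p => Ws p.castSucc
    have hVs : ∀ p j, ∑ i, |Vs p j i| ≤ 1 := fun p => hWs p.castSucc
    have hvn : iterLayers q n Vs v ∈ closedBall 0 R := mapsTo_iterLayers hqR hVs hv
    calc dist (iterLayers σ (n + 1) Ws u) (iterLayers q (n + 1) Ws v)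
        ≤ K * dist (iterLayers σ n Vs u) (iterLayers q n Vs v) + δ :=
          dist_le_mul_dist_add_of_lipschitzOnWith (lipschitzOnWith_applyLayer hσ (hWs _))
            (mapsTo_iterLayers hσR hVs hu) hvn (dist_applyLayer_le hq (hWs _) hvn)
      _ ≤ K * (K ^ n * dist u v + (∑ i ∈ Finset.range n, (K : ℝ) ^ i) * δ) + δ := by
          gcongr
          exact ih hVs
      _ = K ^ (n + 1) * dist u v + (∑ i ∈ Finset.range (n + 1), (K : ℝ) ^ i) * δ := by
          rw [geom_sum_succ]
          ring

lemma abs_nnFun_sub_nnFun_le (hσ : LipschitzOnWith K σ (closedBall 0 R))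
    (hσR : MapsTo σ (closedBall 0 R) (closedBall 0 R))
    (hqR : MapsTo q (closedBall 0 R) (closedBall 0 R))
    (hq : ∀ x ∈ closedBall 0 R, dist (σ x) (q x) ≤ δ) (a : Fin m → ℝ)
    {W1 : Matrix (Fin m) (Fin d) ℝ} (hW1 : ∀ j, ∑ i, |W1 j i| ≤ 1)
    {Ws : Fin n → Matrix (Fin m) (Fin m) ℝ} (hWs : ∀ p j, ∑ i, |Ws p j i| ≤ 1)
    {x : Fin d → ℝ} (hx : x ∈ closedBall 0 R) :
    |nnFun σ a W1 Ws x - nnFun q a W1 Ws x| ≤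
      (∑ j, |a j|) * ((∑ i ∈ Finset.range (n + 1), (K : ℝ) ^ i) * δ) := by
  let u := applyLayer σ W1 x
  let v := applyLayer q W1 x
  have hiter : dist (iterLayers σ n Ws u) (iterLayers q n Ws v) ≤
      (∑ i ∈ Finset.range (n + 1), (K : ℝ) ^ i) * δ := by
    calc dist (iterLayers σ n Ws u) (iterLayers q n Ws v)
        ≤ K ^ n * dist u v + (∑ i ∈ Finset.range n, (K : ℝ) ^ i) * δ :=
          dist_iterLayers_le hσ hσR hqR hq hWs (mapsTo_applyLayer hσR hW1 hx)
            (mapsTo_applyLayer hqR hW1 hx)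
      _ ≤ K ^ n * δ + (∑ i ∈ Finset.range n, (K : ℝ) ^ i) * δ := by
          gcongr
          exact dist_applyLayer_le hq hW1 hx
      _ = (∑ i ∈ Finset.range (n + 1), (K : ℝ) ^ i) * δ := by
          rw [geom_sum_succ', add_mul]
  calc |nnFun σ a W1 Ws x - nnFun q a W1 Ws x|
      = |a ⬝ᵥ (iterLayers σ n Ws u - iterLayers q n Ws v)| := by rw [dotProduct_sub]; rfl
    _ ≤ (∑ j, |a j|) * dist (iterLayers σ n Ws u) (iterLayers q n Ws v) := by
        rw [dist_eq_norm]
        exact norm_dotProduct_le_sum_norm_mul_norm a _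
    _ ≤ (∑ j, |a j|) * ((∑ i ∈ Finset.range (n + 1), (K : ℝ) ^ i) * δ) := by gcongr

end LayerEstimates

/-- Uniform approximation of an admissible-activation network by a
polynomial network: replacing `σ` by a polynomial `P` of degree `φ_σ(ε/L)` everywhere
changes the output by at most `ε` on `[-1,1]^d`, given unit `ℓ1`-bounded weights. -/
theorem network_polynomial_approximation
    (σ : ℝ → ℝ) (hσ : AdmissibleActivation σ)
    (d m L : ℕ) (hL : 1 ≤ L)
    (a : Fin m → ℝ) (W1 : Matrix (Fin m) (Fin d) ℝ)
    (Ws : Fin (L - 1) → Matrix (Fin m) (Fin m) ℝ)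
    (ha : ∑ j, |a j| ≤ 1)
    (hW1 : ∀ j, ∑ i, |W1 j i| ≤ 1)
    (hWs : ∀ p j, ∑ i, |Ws p j i| ≤ 1)
    (ε : ℝ) (hε : 0 < ε) :
    ∃ Pq : Polynomial ℝ, Pq.natDegree = approxOrder σ (ε / L) ∧
      ∀ x : Fin d → ℝ, (∀ i, x i ∈ Set.Icc (-1 : ℝ) 1) →
        |nnFun σ a W1 Ws x - nnFun (fun y => Pq.eval y) a W1 Ws x| ≤ ε := by
  obtain ⟨-, exists_poly, hσ_lip, hσ_le⟩ := hσ
  have hL0 : (0 : ℝ) < L := by exact_mod_cast hL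
  obtain ⟨P, hP_deg, hP_approx, hP_range⟩ := exists_poly (ε / L) (by positivity)
  refine ⟨P, hP_deg, fun x hx => ?_⟩
  have hball : Metric.closedBall (0 : ℝ) 1 = Set.Icc (-1) 1 := by simp [Real.closedBall_eq_Icc]
  have hx_ball : x ∈ Metric.closedBall 0 1 :=
    mem_closedBall_zero_iff.2 <| (pi_norm_le_iff_of_nonneg zero_le_one).2 fun i => abs_le.2 (hx i)
  calc |nnFun σ a W1 Ws x - nnFun (fun y => P.eval y) a W1 Ws x|
      ≤ (∑ j, |a j|) * ((∑ i ∈ Finset.range (L - 1 + 1), ((1 : NNReal) : ℝ) ^ i) * (ε / L)) := by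
        refine abs_nnFun_sub_nnFun_le (R := 1) ?_ ?_ ?_ ?_ a hW1 hWs hx_ball <;> rw [hball]
        · exact hσ_lip
        · exact fun y hy => abs_le.1 (hσ_le y hy)
        · exact fun y hy => Set.Icc_subset_Icc_left (by norm_num) (hP_range y hy)
        · exact fun y hy => dist_comm (σ y) _ ▸ hP_approx y hy
    _ = (∑ j, |a j|) * ε := by simp [Nat.sub_add_cancel hL, mul_div_cancel₀ ε hL0.ne']
    _ ≤ ε := mul_le_of_le_one_left hε.le ha

end
end
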